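/- For every number of products m ≥ 1 and every value distribution f on ℝ_{≥0}^m with finite support, there exist a coarse horizontal disclosure σ with finite signal space S, a price vector p ∈ ℝ_{≥0}^m, and a selection rule a defined on the signals s with r(s) > 0, taking values in {1,…,m} ∪ {∅}, such that: (i) if a(s) = i then ν_i(s) − p_i ≥ 0 and ν_i(s) − p_i ≥ ν_{i'}(s) − p_{i'} for every i' (the buyer optimally purchases product i); (ii) if a(s) = ∅ then ν_{i'}(s) − p_{i'} ≤ 0 for every i' (the buyer optimally purchases nothing); and (iii) the revenue satisfies Σ_{s : a(s) ≠ ∅} r(s)·p_{a(s)} ≥ 0.5017 · E[max_{i∈[m]} v_i]. In particular, the pricing mechanism achieves at least 50.17% of the revenue of any IC-IR mechanism. -/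

import Mathlib

open Finset

noncomputable section

namespace Screening

variable {m : ℕ} {ι : Type}

/-- The ex-ante probability of signal `s` under information structure `σ`. -/
def sigR (V : Finset (Fin m → ℝ)) (f : (Fin m → ℝ) → ℝ)
    (σ : (Fin m → ℝ) → ι → ℝ) (s : ι) : ℝ :=
  ∑ v ∈ V, f v * σ v s

/-- The posterior mean value of product `i` upon receiving signal `s`. -/
def post (V : Finset (Fin m → ℝ)) (f : (Fin m → ℝ) → ℝ)
    (σ : (Fin m → ℝ) → ι → ℝ) (s : ι) (i : Fin m) : ℝ :=
  (∑ v ∈ V, f v * σ v s * v i) / sigR V f σ s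

/-- `σ` is an information structure with finite signal space `S`. -/
def IsInfo (V : Finset (Fin m → ℝ)) (S : Finset ι)
    (σ : (Fin m → ℝ) → ι → ℝ) : Prop :=
  ∀ v ∈ V, (∀ s, 0 ≤ σ v s) ∧ (∀ s, s ∉ S → σ v s = 0) ∧ (∑ s ∈ S, σ v s = 1)

/-- `x` is a feasible (random, unit-demand) allocation rule on `S`. -/
def IsAlloc (S : Finset ι) (x : ι → Fin m → ℝ) : Prop :=
  ∀ s ∈ S, (∀ i, 0 ≤ x s i) ∧ (∀ i, x s i ≤ 1) ∧ (∑ i, x s i ≤ 1)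

/-- Incentive compatibility. -/
def IC (V : Finset (Fin m → ℝ)) (f : (Fin m → ℝ) → ℝ) (S : Finset ι)
    (σ : (Fin m → ℝ) → ι → ℝ) (x : ι → Fin m → ℝ) (p : ι → ℝ) : Prop :=
  ∀ s ∈ S, 0 < sigR V f σ s → ∀ s' ∈ S,
    (∑ i, post V f σ s i * x s' i) - p s' ≤ (∑ i, post V f σ s i * x s i) - p s

/-- Individual rationality. -/
def IR (V : Finset (Fin m → ℝ)) (f : (Fin m → ℝ) → ℝ) (S : Finset ι)
    (σ : (Fin m → ℝ) → ι → ℝ) (x : ι → Fin m → ℝ) (p : ι → ℝ) : Prop :=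
  ∀ s ∈ S, 0 < sigR V f σ s → 0 ≤ (∑ i, post V f σ s i * x s i) - p s

/-- Expected revenue of a mechanism. -/
def Rev (V : Finset (Fin m → ℝ)) (f : (Fin m → ℝ) → ℝ) (S : Finset ι)
    (σ : (Fin m → ℝ) → ι → ℝ) (p : ι → ℝ) : ℝ :=
  ∑ s ∈ S, sigR V f σ s * p s

/-- Nonemptiness of `Fin m` as a finset, given `0 < m`. -/
lemma univNe (hm : 0 < m) : (univ : Finset (Fin m)).Nonempty :=
  univ_nonempty_iff.mpr (Fin.pos_iff_nonempty.mp hm)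

/-- The maximum value `max_i v_i`. -/
def vmax (hm : 0 < m) (v : Fin m → ℝ) : ℝ :=
  univ.sup' (univNe hm) v

/-- The smallest-index maximizing coordinate of `v`. -/
def istar (hm : 0 < m) (v : Fin m → ℝ) : Fin m :=
  (univ.filter (fun i => ∀ j, v j ≤ v i)).min' (by
    obtain ⟨i, -, hi⟩ := Finset.exists_max_image (univ : Finset (Fin m)) v (univNe hm)
    exact ⟨i, mem_filter.mpr ⟨mem_univ _, fun j => hi j (mem_univ _)⟩⟩)

/-- The probability that product `i` is the (selected) highest-value product. -/
def probTop (V : Finset (Fin m → ℝ)) (f : (Fin m → ℝ) → ℝ)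
    (top : (Fin m → ℝ) → Fin m) (i : Fin m) : ℝ :=
  ∑ v ∈ V.filter (fun v => top v = i), f v

/-- The posterior mean value of product `j` conditional on `i` being the highest-value
product (i.e. conditional on the horizontal-disclosure signal `i`). -/
def condMean (V : Finset (Fin m → ℝ)) (f : (Fin m → ℝ) → ℝ)
    (top : (Fin m → ℝ) → Fin m) (i j : Fin m) : ℝ :=
  (∑ v ∈ V.filter (fun v => top v = i), f v * v j) / probTop V f top i


/-- Abstract achievability of revenue `R`. -/
def Ach (q : Fin m → ℝ) (C : Fin m → Fin m → ℝ) (R : ℝ) : Prop :=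
  ∃ (K : Type) (_ : Fintype K) (N : K → Finset (Fin m)) (ν : Fin m → K → ℝ)
    (p : Fin m → ℝ) (ρ : K → ℝ),
    Function.Injective N ∧ (∀ i k, 0 ≤ ν i k) ∧ (∀ i k, ν i k ≠ 0 → i ∈ N k) ∧
    (∀ i, ∑ k, ν i k = q i) ∧ (∀ i, 0 ≤ p i) ∧
    (∀ k, ρ k ≤ 0 ∨ ∃ h, ρ k ≤ p h ∧ 0 ≤ ∑ l, ν l k * (C l h - p h) ∧
      ∀ j, p j < ρ k → ∑ l, ν l k * (C l j - p j) ≤ ∑ l, ν l k * (C l h - p h)) ∧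
    R ≤ ∑ k, (∑ i, ν i k) * ρ k

lemma opt_exists (hm : 0 < m) (p g : Fin m → ℝ) (ρ : ℝ) (hp : ∀ i, 0 ≤ p i)
    (h : ρ ≤ 0 ∨ ∃ h, ρ ≤ p h ∧ 0 ≤ g h ∧ ∀ j, p j < ρ → g j ≤ g h) :
    ∃ o : Option (Fin m), (∀ i, o = some i → 0 ≤ g i ∧ ∀ i', g i' ≤ g i) ∧
      (o = none → ∀ i', g i' ≤ 0) ∧ ρ ≤ o.elim 0 p := by
  obtain ⟨i, -, hi⟩ := Finset.exists_max_image (univ : Finset (Fin m)) g (univNe hm)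
  rcases h with h | ⟨h, h1, h2, h3⟩
  · by_cases h0 : 0 ≤ g i
    · refine ⟨some i, ?_, by simp, ?_⟩
      · intro j hj
        cases hj
        exact ⟨h0, fun k => hi k (mem_univ _)⟩
      · exact h.trans (hp i)
    · refine ⟨none, by simp, ?_, h⟩
      intro _ k
      exact (hi k (mem_univ _)).trans (not_le.mp h0).le
  · by_cases hlt : p i < ρ
    · refine ⟨some h, ?_, by simp, h1⟩
      intro j hj
      cases hj
      exact ⟨h2, fun k => (hi k (mem_univ _)).trans (h3 i hlt)⟩
    · refine ⟨some i, ?_, by simp, not_lt.mp hlt⟩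
      intro j hj
      cases hj
      exact ⟨h2.trans (hi h (mem_univ _)), fun k => hi k (mem_univ _)⟩

lemma istar_spec (hm : 0 < m) (v : Fin m → ℝ) (j : Fin m) : v j ≤ v (istar hm v) := by
  have h := Finset.min'_mem (univ.filter (fun i => ∀ j, v j ≤ v i)) (by
    obtain ⟨i, -, hi⟩ := Finset.exists_max_image (univ : Finset (Fin m)) v (univNe hm)
    exact ⟨i, mem_filter.mpr ⟨mem_univ _, fun j => hi j (mem_univ _)⟩⟩)
  exact (mem_filter.mp h).2 j

lemma vmax_eq (hm : 0 < m) (v : Fin m → ℝ) : vmax hm v = v (istar hm v) := by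
  apply le_antisymm
  · exact Finset.sup'_le _ _ (fun j _ => istar_spec hm v j)
  · exact Finset.le_sup' v (mem_univ _)

lemma sum_fiber (V : Finset (Fin m → ℝ)) (top : (Fin m → ℝ) → Fin m)
    (g : Fin m → (Fin m → ℝ) → ℝ) :
    ∑ v ∈ V, g (top v) v = ∑ i, ∑ v ∈ V.filter (fun v => top v = i), g i v := by
  rw [← Finset.sum_fiberwise V top]
  refine Finset.sum_congr rfl fun i _ => Finset.sum_congr rfl fun v hv => ?_
  rw [(mem_filter.mp hv).2]

lemma prob_mul_cond (V : Finset (Fin m → ℝ)) (f : (Fin m → ℝ) → ℝ)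
    (hfpos : ∀ v ∈ V, 0 < f v) (top : (Fin m → ℝ) → Fin m) (i j : Fin m) :
    probTop V f top i * condMean V f top i j =
      ∑ v ∈ V.filter (fun v => top v = i), f v * v j := by
  by_cases h : probTop V f top i = 0
  · rw [h, zero_mul]
    have h2 := (Finset.sum_eq_zero_iff_of_nonneg
      (fun v hv => (hfpos v (mem_filter.mp hv).1).le)).mp h
    refine (Finset.sum_eq_zero fun v hv => ?_).symm
    rw [h2 v hv, zero_mul]
  · unfold condMean
    field_simp

lemma rev_le (hm : 0 < m) (V : Finset (Fin m → ℝ)) (f : (Fin m → ℝ) → ℝ)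
    (hfpos : ∀ v ∈ V, 0 < f v) (hnn : ∀ v ∈ V, ∀ i, 0 ≤ v i)
    (κ : Type) (S' : Finset κ) (σ' : (Fin m → ℝ) → κ → ℝ)
    (x : κ → Fin m → ℝ) (q : κ → ℝ)
    (h1 : IsInfo V S' σ') (h2 : IsAlloc S' x) (h4 : IR V f S' σ' x q) :
    Rev V f S' σ' q ≤ ∑ v ∈ V, f v * vmax hm v := by
  have key : ∀ s ∈ S', sigR V f σ' s * q s ≤ ∑ v ∈ V, f v * σ' v s * vmax hm v := by
    intro s hs
    have hterm : ∀ v ∈ V, 0 ≤ f v * σ' v s := fun v hv =>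
      mul_nonneg (hfpos v hv).le ((h1 v hv).1 s)
    have hr0 : 0 ≤ sigR V f σ' s := Finset.sum_nonneg hterm
    have hvm : ∀ v ∈ V, 0 ≤ vmax hm v := fun v hv => by
      rw [vmax_eq]; exact hnn v hv _
    rcases hr0.eq_or_lt with h0 | hpos
    · rw [← h0, zero_mul]
      exact Finset.sum_nonneg fun v hv => mul_nonneg (hterm v hv) (hvm v hv)
    · have hir := h4 s hs hpos
      calc sigR V f σ' s * q s ≤ sigR V f σ' s * ∑ i, post V f σ' s i * x s i := by
            apply mul_le_mul_of_nonneg_left _ hr0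
            linarith
        _ = ∑ i, (∑ v ∈ V, f v * σ' v s * v i) * x s i := by
            rw [Finset.mul_sum]
            refine Finset.sum_congr rfl fun i _ => ?_
            unfold post
            field_simp
        _ = ∑ v ∈ V, f v * σ' v s * ∑ i, v i * x s i := by
            simp_rw [Finset.sum_mul, Finset.mul_sum]
            rw [Finset.sum_comm]
            refine Finset.sum_congr rfl fun v _ => Finset.sum_congr rfl fun i _ => ?_
            ring
        _ ≤ _ := by
            refine Finset.sum_le_sum fun v hv => mul_le_mul_of_nonneg_left ?_ (hterm v hv)
            obtain ⟨hx0, -, hx1⟩ := h2 s hs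
            calc ∑ i, v i * x s i ≤ ∑ i, vmax hm v * x s i := by
                  refine Finset.sum_le_sum fun i _ => mul_le_mul_of_nonneg_right ?_ (hx0 i)
                  rw [vmax_eq]; exact istar_spec hm v i
              _ = vmax hm v * ∑ i, x s i := by rw [Finset.mul_sum]
              _ ≤ vmax hm v * 1 := mul_le_mul_of_nonneg_left hx1 (hvm v hv)
              _ = vmax hm v := mul_one _
  calc Rev V f S' σ' q ≤ ∑ s ∈ S', ∑ v ∈ V, f v * σ' v s * vmax hm v :=
        Finset.sum_le_sum key
    _ = ∑ v ∈ V, f v * vmax hm v * ∑ s ∈ S', σ' v s := by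
        rw [Finset.sum_comm]
        refine Finset.sum_congr rfl fun v _ => ?_
        rw [Finset.mul_sum]
        refine Finset.sum_congr rfl fun s _ => ?_
        ring
    _ = _ := by
        refine Finset.sum_congr rfl fun v hv => ?_
        rw [(h1 v hv).2.2, mul_one]

lemma convert_ach (hm : 0 < m)
    (V : Finset (Fin m → ℝ)) (f : (Fin m → ℝ) → ℝ)
    (hfpos : ∀ v ∈ V, 0 < f v) (R : ℝ)
    (hA : Ach (probTop V f (istar hm)) (condMean V f (istar hm)) R) :
    ∃ (S : Finset (Finset (Fin m))) (τ : Fin m → Finset (Fin m) → ℝ)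
      (p : Fin m → ℝ) (a : Finset (Fin m) → Option (Fin m)),
      (∀ s ∈ S, s.Nonempty) ∧
      (∀ i : Fin m, (∀ s, 0 ≤ τ i s) ∧ (∀ s, s ∉ S → τ i s = 0) ∧ (∑ s ∈ S, τ i s = 1)) ∧
      (∀ i : Fin m, ∀ s, 0 < τ i s → i ∈ s) ∧
      (∀ i, 0 ≤ p i) ∧
      (∀ s ∈ S, 0 < sigR V f (fun v => τ (istar hm v)) s →
        (∀ i : Fin m, a s = some i →
          0 ≤ post V f (fun v => τ (istar hm v)) s i - p i ∧
          (∀ i' : Fin m, post V f (fun v => τ (istar hm v)) s i' - p i' ≤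
            post V f (fun v => τ (istar hm v)) s i - p i)) ∧
        (a s = none → ∀ i' : Fin m, post V f (fun v => τ (istar hm v)) s i' - p i' ≤ 0)) ∧
      R ≤ (∑ s ∈ S, sigR V f (fun v => τ (istar hm v)) s * (a s).elim 0 p) := by
  classical
  set q := probTop V f (istar hm) with hq
  set C := condMean V f (istar hm) with hC
  obtain ⟨K, _, N, ν, p, ρ, hN, hν, hmem, hsumν, hp, hopt, hR⟩ := hA
  have hν0 : ∀ i, q i = 0 → ∀ k, ν i k = 0 := by
    intro i hi k
    have := hsumν i
    rw [hi] at this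
    exact (Finset.sum_eq_zero_iff_of_nonneg (fun k _ => hν i k)).mp this k (mem_univ _)
  have hq0 : ∀ i, 0 ≤ q i := fun i => by
    rw [← hsumν i]; exact Finset.sum_nonneg fun k _ => hν i k
  obtain ⟨μ, hμ⟩ : ∃ μ : Fin m → Finset (Fin m) → ℝ,
      ∀ i s, μ i s = ∑ k, if N k = s then ν i k else 0 := ⟨_, fun _ _ => rfl⟩
  have hμN : ∀ i k, μ i (N k) = ν i k := by
    intro i k
    rw [hμ, Finset.sum_eq_single k]
    · simp
    · intro b _ hb
      rw [if_neg]
      exact fun h => hb (hN h)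
    · simp
  have hμ0 : ∀ i s, 0 ≤ μ i s := by
    intro i s
    rw [hμ]
    refine Finset.sum_nonneg fun k _ => ?_
    split_ifs
    · exact hν i k
    · exact le_rfl
  have hμmem : ∀ i s, μ i s ≠ 0 → i ∈ s := by
    intro i s h
    rw [hμ] at h
    obtain ⟨k, -, hk⟩ := Finset.exists_ne_zero_of_sum_ne_zero h
    by_cases hks : N k = s
    · rw [if_pos hks] at hk
      rw [← hks]; exact hmem i k hk
    · simp [hks] at hk
  have hμsum : ∀ i, ∑ s, μ i s = q i := by
    intro i
    simp_rw [hμ]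
    rw [Finset.sum_comm]
    simp [hsumν]
  have hμz : ∀ i, q i = 0 → ∀ s, μ i s = 0 := by
    intro i hi s
    rw [hμ]
    refine Finset.sum_eq_zero fun k _ => ?_
    simp [hν0 i hi k]
  obtain ⟨τ, hτ⟩ : ∃ τ : Fin m → Finset (Fin m) → ℝ,
      ∀ i s, τ i s = if q i = 0 then (if s = {i} then 1 else 0) else μ i s / q i :=
    ⟨_, fun _ _ => rfl⟩
  have hτq : ∀ i s, q i * τ i s = μ i s := by
    intro i s
    rw [hτ]
    by_cases h : q i = 0
    · simp [h, hμz i h s]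
    · rw [if_neg h]; field_simp
  have hτ0 : ∀ i s, 0 ≤ τ i s := by
    intro i s
    rw [hτ]
    split_ifs
    · norm_num
    · norm_num
    · exact div_nonneg (hμ0 i s) (hq0 i)
  have hτmem : ∀ i s, τ i s ≠ 0 → i ∈ s := by
    intro i s h
    rw [hτ] at h
    by_cases h0 : q i = 0
    · rw [if_pos h0] at h
      by_cases hs : s = {i}
      · simp [hs]
      · simp [hs] at h
    · rw [if_neg h0] at h
      apply hμmem
      intro h'
      simp [h'] at h
  have hτsum : ∀ i, ∑ s, τ i s = 1 := by
    intro i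
    simp_rw [hτ]
    by_cases h0 : q i = 0
    · simp [h0]
    · simp only [if_neg h0]
      rw [← Finset.sum_div, hμsum, div_self h0]
  have hchoice : ∀ s, ∃ o : Option (Fin m),
      (∀ i, o = some i → 0 ≤ ∑ l, μ l s * (C l i - p i) ∧
        ∀ i', ∑ l, μ l s * (C l i' - p i') ≤ ∑ l, μ l s * (C l i - p i)) ∧
      (o = none → ∀ i', ∑ l, μ l s * (C l i' - p i') ≤ 0) ∧
      ∀ k, N k = s → ρ k ≤ o.elim 0 p := by
    intro s
    by_cases hs : ∃ k, N k = s
    · obtain ⟨k, rfl⟩ := hs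
      have hk := hopt k
      simp_rw [← hμN] at hk
      obtain ⟨o, h1, h2, h3⟩ := opt_exists hm p
        (fun i => ∑ l, μ l (N k) * (C l i - p i)) (ρ k) hp hk
      refine ⟨o, h1, h2, ?_⟩
      intro k' hk'
      rw [hN hk']; exact h3
    · obtain ⟨o, h1, h2, h3⟩ := opt_exists hm p
        (fun i => ∑ l, μ l s * (C l i - p i)) 0 hp (Or.inl le_rfl)
      exact ⟨o, h1, h2, fun k hk => absurd ⟨k, hk⟩ hs⟩
  choose a ha1 ha2 ha3 using hchoice
  have hsig : ∀ s, sigR V f (fun v => τ (istar hm v)) s = ∑ i, μ i s := by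
    intro s
    unfold sigR
    rw [sum_fiber V (istar hm) (fun i v => f v * τ i s)]
    refine Finset.sum_congr rfl fun i _ => ?_
    rw [← Finset.sum_mul, ← hτq]
    rfl
  have hnum : ∀ s j, ∑ v ∈ V, f v * τ (istar hm v) s * v j = ∑ i, μ i s * C i j := by
    intro s j
    rw [sum_fiber V (istar hm) (fun i v => f v * τ i s * v j)]
    refine Finset.sum_congr rfl fun i _ => ?_
    have := prob_mul_cond V f hfpos (istar hm) i j
    rw [← hτq]
    calc _ = τ i s * ∑ v ∈ V.filter (fun v => istar hm v = i), f v * v j := by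
          rw [Finset.mul_sum]
          refine Finset.sum_congr rfl fun v _ => ?_
          ring
      _ = _ := by rw [← this]; ring
  have hpost : ∀ s, 0 < sigR V f (fun v => τ (istar hm v)) s → ∀ j,
      post V f (fun v => τ (istar hm v)) s j - p j =
        (∑ l, μ l s * (C l j - p j)) / ∑ i, μ i s := by
    intro s hs j
    have h1 : (∑ l, μ l s * (C l j - p j)) = ∑ l, μ l s * C l j - (∑ i, μ i s) * p j := by
      rw [Finset.sum_mul, ← Finset.sum_sub_distrib]
      refine Finset.sum_congr rfl fun l _ => ?_
      ring
    rw [hsig] at hs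
    unfold post
    rw [hnum, hsig, h1]
    field_simp
  refine ⟨univ.filter (fun s => s.Nonempty), τ, p, a, ?_, ?_, ?_, hp, ?_, ?_⟩
  · intro s hs; exact (mem_filter.mp hs).2
  · intro i
    refine ⟨hτ0 i, ?_, ?_⟩
    · intro s hs
      by_contra h
      exact hs (mem_filter.mpr ⟨mem_univ _, ⟨i, hτmem i s h⟩⟩)
    · rw [← hτsum i]
      refine Finset.sum_filter_of_ne fun s _ h => ⟨i, hτmem i s h⟩
  · intro i s h
    exact hτmem i s h.ne'
  · intro s _ hpos
    have hM : 0 < ∑ i, μ i s := by rw [← hsig]; exact hpos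
    refine ⟨fun i hi => ⟨?_, fun i' => ?_⟩, fun hn i' => ?_⟩
    · rw [hpost s hpos]
      exact div_nonneg (ha1 s i hi).1 hM.le
    · rw [hpost s hpos, hpost s hpos]
      exact div_le_div_of_nonneg_right ((ha1 s i hi).2 i') hM.le
    · rw [hpost s hpos]
      exact div_nonpos_of_nonpos_of_nonneg (ha2 s hn i') hM.le
  · refine hR.trans ?_
    have e1 : ∑ s ∈ univ.filter (fun s : Finset (Fin m) => s.Nonempty),
        sigR V f (fun v => τ (istar hm v)) s * (a s).elim 0 p =
        ∑ s, (∑ i, μ i s) * (a s).elim 0 p := by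
      simp_rw [hsig]
      refine Finset.sum_filter_of_ne fun s _ h => ?_
      have h' : ∑ i, μ i s ≠ 0 := left_ne_zero_of_mul h
      obtain ⟨i, -, hi⟩ := Finset.exists_ne_zero_of_sum_ne_zero h'
      exact ⟨i, hμmem i s hi⟩
    rw [e1]
    have e2 : ∀ s, (∑ i, μ i s) * (a s).elim 0 p =
        ∑ k, if N k = s then (∑ i, ν i k) * (a (N k)).elim 0 p else 0 := by
      intro s
      simp_rw [hμ]
      rw [Finset.sum_comm, Finset.sum_mul]
      refine Finset.sum_congr rfl fun k _ => ?_
      by_cases h : N k = s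
      · simp [h]
      · simp [h]
    simp_rw [e2]
    rw [Finset.sum_comm]
    refine Finset.sum_le_sum fun k _ => ?_
    simp only [Finset.sum_ite_eq, mem_univ, if_true]
    exact mul_le_mul_of_nonneg_left (ha3 (N k) k rfl) (Finset.sum_nonneg fun i _ => hν i k)

lemma sum_off (H : Finset (Fin m)) (g : Fin m → ℝ) :
    ∑ i, (if i ∈ H then 0 else g i) = ∑ i ∈ Hᶜ, g i := by
  classical
  rw [← Finset.sum_add_sum_compl H, Finset.sum_eq_zero (fun i hi => if_pos hi), zero_add]
  exact Finset.sum_congr rfl fun i hi => if_neg (mem_compl.mp hi)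

lemma sum_on (H : Finset (Fin m)) (g : Fin m → ℝ) :
    ∑ i, (if i ∈ H then g i else 0) = ∑ i ∈ H, g i := by
  classical
  rw [← Finset.sum_filter]
  refine Finset.sum_congr ?_ fun _ _ => rfl
  ext i; simp

lemma ach_full (q : Fin m → ℝ) (C : Fin m → Fin m → ℝ) (R : ℝ)
    (hq : ∀ i, 0 ≤ q i) (hq1 : ∑ i, q i = 1) (hC : ∀ l i, 0 ≤ C l i)
    (j : Fin m) (hR : R ≤ ∑ l, q l * C l j) : Ach q C R := by
  classical
  refine ⟨Unit, inferInstance, fun _ => univ, fun i _ => q i, fun _ => ∑ l, q l * C l j,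
    fun _ => ∑ l, q l * C l j, ?_, fun i _ => hq i, ?_, ?_, ?_, ?_, ?_⟩
  · intro a b _; rfl
  · intro i _ _; exact mem_univ i
  · intro i; simp
  · intro i; exact Finset.sum_nonneg fun l _ => mul_nonneg (hq l) (hC l j)
  · intro _
    right
    refine ⟨j, le_rfl, ?_, fun i hi => absurd hi (lt_irrefl _)⟩
    simp only [mul_sub, Finset.sum_sub_distrib, ← Finset.sum_mul, hq1]
    linarith
  · simp [hq1, hR]

lemma ach_two (q : Fin m → ℝ) (C : Fin m → Fin m → ℝ) (R : ℝ)
    (hq : ∀ i, 0 ≤ q i) (hC : ∀ l i, 0 ≤ C l i) (hCt : ∀ l i, C l i ≤ C l l)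
    (H B : Finset (Fin m)) (t P : ℝ) (ht : 0 ≤ t) (htP : t ≤ P)
    (hBH : ∀ i ∈ B, i ∉ H) (hB : ∀ i ∈ B, t ≤ C i i)
    (lam : Fin m → ℝ) (hl0 : ∀ h ∈ H, 0 ≤ lam h) (hl1 : ∑ h ∈ H, lam h ≤ 1)
    (h1 : ∀ h ∈ H, lam h * (P * ∑ i ∈ Hᶜ, q i) ≤ q h * (C h h - P))
    (h2 : ∀ h ∈ H, ∀ k ∈ B, lam h * (∑ i ∈ Hᶜ, q i * C i i + (P - t) * ∑ i ∈ Hᶜ, q i)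
      + q h * (C h k - t) ≤ q h * (C h h - P))
    (hR : R ≤ P * (∑ i ∈ H, q i + (∑ h ∈ H, lam h) * ∑ i ∈ Hᶜ, q i)
      + t * ((1 - ∑ h ∈ H, lam h) * ∑ i ∈ B, q i)) : Ach q C R := by
  classical
  obtain ⟨ν, hν⟩ : ∃ ν : Fin m → Fin m → ℝ, ∀ i k, ν i k =
      if k ∈ H then ((if i = k then q i else 0) + (if i ∈ H then 0 else lam k * q i))
      else (if i = k then (1 - ∑ h ∈ H, lam h) * q i else 0) := ⟨_, fun _ _ => rfl⟩
  have hνH : ∀ k ∈ H, ∀ g : Fin m → ℝ, ∑ i, ν i k * g i =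
      q k * g k + lam k * ∑ i ∈ Hᶜ, q i * g i := by
    intro k hk g
    simp only [hν, if_pos hk, add_mul, ite_mul, zero_mul, Finset.sum_add_distrib,
      Finset.sum_ite_eq', mem_univ, if_true, sum_off]
    rw [Finset.mul_sum]
    simp only [mul_assoc]
  have hνL : ∀ k ∉ H, ∀ g : Fin m → ℝ, ∑ i, ν i k * g i =
      (1 - ∑ h ∈ H, lam h) * q k * g k := by
    intro k hk g
    simp [hν, if_neg hk]
  have hνH1 : ∀ k ∈ H, ∑ i, ν i k = q k + lam k * ∑ i ∈ Hᶜ, q i := by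
    intro k hk
    have := hνH k hk (fun _ => 1)
    simpa using this
  have hνL1 : ∀ k ∉ H, ∑ i, ν i k = (1 - ∑ h ∈ H, lam h) * q k := by
    intro k hk
    have := hνL k hk (fun _ => 1)
    simpa using this
  have hQL : 0 ≤ ∑ i ∈ Hᶜ, q i := Finset.sum_nonneg fun i _ => hq i
  refine ⟨Fin m, inferInstance, fun k => if k ∈ H then insert k Hᶜ else {k}, ν,
    fun k => if k ∈ B then t else P, fun k => if k ∈ H then P else if k ∈ B then t else 0,
    ?_, ?_, ?_, ?_, ?_, ?_, ?_⟩
  · intro a b hab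
    have hab : (if a ∈ H then insert a Hᶜ else {a}) = (if b ∈ H then insert b Hᶜ else {b}) := hab
    by_cases ha : a ∈ H <;> by_cases hb : b ∈ H
    · rw [if_pos ha, if_pos hb] at hab
      have : a ∈ insert b Hᶜ := hab ▸ mem_insert_self _ _
      rcases mem_insert.mp this with h | h
      · exact h
      · exact absurd ha (mem_compl.mp h)
    · rw [if_pos ha, if_neg hb] at hab
      have : a ∈ ({b} : Finset (Fin m)) := hab ▸ mem_insert_self _ _
      exact mem_singleton.mp this
    · rw [if_neg ha, if_pos hb] at hab
      have : b ∈ ({a} : Finset (Fin m)) := hab ▸ mem_insert_self _ _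
      exact (mem_singleton.mp this).symm
    · rw [if_neg ha, if_neg hb] at hab
      exact Finset.singleton_injective hab
  · intro i k
    rw [hν]
    by_cases hk : k ∈ H
    · rw [if_pos hk]
      apply add_nonneg
      · split_ifs
        · exact hq i
        · exact le_rfl
      · split_ifs
        · exact le_rfl
        · exact mul_nonneg (hl0 k hk) (hq i)
    · rw [if_neg hk]
      split_ifs
      · exact mul_nonneg (by linarith) (hq i)
      · exact le_rfl
  · intro i k h
    rw [hν] at h
    by_cases hk : k ∈ H
    · rw [if_pos hk] at h
      simp only [if_pos hk]
      by_cases hik : i = k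
      · rw [hik]; exact mem_insert_self _ _
      · by_cases hi : i ∈ H
        · simp [hik, hi] at h
        · exact mem_insert_of_mem (mem_compl.mpr hi)
    · rw [if_neg hk] at h
      simp only [if_neg hk]
      by_cases hik : i = k
      · simp [hik]
      · simp [hik] at h
  · intro i
    simp only [hν]
    rw [← Finset.sum_filter_add_sum_filter_not univ (fun k => k ∈ H)]
    have e1 : univ.filter (fun k => k ∈ H) = H := by ext; simp
    have e2 : univ.filter (fun k => ¬ k ∈ H) = Hᶜ := by ext; simp
    rw [e1, e2, Finset.sum_congr rfl (fun k (hk : k ∈ H) => if_pos hk),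
      Finset.sum_congr rfl (fun k (hk : k ∈ Hᶜ) => if_neg (mem_compl.mp hk)),
      Finset.sum_add_distrib, Finset.sum_ite_eq, Finset.sum_ite_eq]
    by_cases hi : i ∈ H
    · simp [hi]
    · simp only [hi, if_false, mem_compl, not_false_iff, if_true]
      rw [← Finset.sum_mul]; ring
  · intro i
    dsimp only
    split_ifs
    · exact ht
    · exact ht.trans htP
  · intro k
    by_cases hk : k ∈ H
    · right
      have hkB : k ∉ B := fun h => hBH k h hk
      have hlow : q k * (C k k - P) - lam k * (P * ∑ i ∈ Hᶜ, q i) ≤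
          ∑ l, ν l k * (C l k - P) := by
        rw [hνH k hk]
        have : -(P * ∑ i ∈ Hᶜ, q i) ≤ ∑ i ∈ Hᶜ, q i * (C i k - P) := by
          rw [Finset.mul_sum, ← Finset.sum_neg_distrib]
          refine Finset.sum_le_sum fun i _ => ?_
          nlinarith [mul_nonneg (hq i) (hC i k)]
        nlinarith [mul_le_mul_of_nonneg_left this (hl0 k hk)]
      refine ⟨k, ?_, ?_, ?_⟩
      · simp [hk, hkB]
      · simp only [if_neg hkB]
        linarith [h1 k hk]
      · intro j hj
        simp only [if_pos hk] at hj
        have hjB : j ∈ B := by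
          by_contra h
          simp [h] at hj
        simp only [if_neg hkB, if_pos hjB]
        refine le_trans ?_ hlow
        rw [hνH k hk]
        have : ∑ i ∈ Hᶜ, q i * (C i j - t) ≤ ∑ i ∈ Hᶜ, q i * C i i - t * ∑ i ∈ Hᶜ, q i := by
          rw [Finset.mul_sum, ← Finset.sum_sub_distrib]
          refine Finset.sum_le_sum fun i _ => ?_
          nlinarith [mul_le_mul_of_nonneg_left (hCt i j) (hq i)]
        nlinarith [mul_le_mul_of_nonneg_left this (hl0 k hk), h2 k hk j hjB]
    · by_cases hkB : k ∈ B
      · right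
        refine ⟨k, ?_, ?_, ?_⟩
        · simp [hk, hkB]
        · rw [hνL k hk]
          simp only [if_pos hkB]
          exact mul_nonneg (mul_nonneg (by linarith) (hq k)) (by linarith [hB k hkB])
        · intro j hj
          simp only [if_neg hk, if_pos hkB] at hj
          split_ifs at hj
          · exact absurd hj (lt_irrefl _)
          · linarith
      · left
        simp [hk, hkB]
  · refine hR.trans (le_of_eq ?_)
    have e : ∀ k, (∑ i, ν i k) * (if k ∈ H then P else if k ∈ B then t else 0) =
        (if k ∈ H then (q k + lam k * ∑ i ∈ Hᶜ, q i) * P else 0) +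
        (if k ∈ B then (1 - ∑ h ∈ H, lam h) * q k * t else 0) := by
      intro k
      by_cases hk : k ∈ H
      · have hkB : k ∉ B := fun h => hBH k h hk
        simp only [if_pos hk, if_neg hkB, hνH1 k hk, add_zero]
      · by_cases hkB : k ∈ B
        · simp only [if_neg hk, if_pos hkB, hνL1 k hk, zero_add]
        · simp [hk, hkB]
    simp only [e, Finset.sum_add_distrib, sum_on, ← Finset.sum_mul, ← Finset.mul_sum]
    ring

lemma max_flow (E : Fin m → Fin m → Prop) (A B : Fin m → ℝ)
    (hA : ∀ i, 0 ≤ A i) (hB : ∀ i, 0 ≤ B i) :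
    ∃ z : Fin m → Fin m → ℝ, (∀ h l, 0 ≤ z h l) ∧ (∀ h l, ¬ E h l → z h l = 0) ∧
      (∀ h, ∑ l, z h l ≤ A h) ∧ (∀ l, ∑ h, z h l ≤ B l) ∧
      (∀ h l, E h l → ∑ l', z h l' = A h ∨ ∑ h', z h' l = B l) := by
  classical
  let Z : Set (Fin m → Fin m → ℝ) := {z | (∀ h l, 0 ≤ z h l) ∧ (∀ h l, ¬ E h l → z h l = 0) ∧
      (∀ h, ∑ l, z h l ≤ A h) ∧ (∀ l, ∑ h, z h l ≤ B l)}
  have hcl : IsClosed Z := by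
    have c1 : IsClosed {z : Fin m → Fin m → ℝ | ∀ h l, 0 ≤ z h l} := by
      simp only [Set.ofPred_forall]
      exact isClosed_iInter fun h => isClosed_iInter fun l =>
        isClosed_le (by fun_prop) (by fun_prop)
    have c2 : IsClosed {z : Fin m → Fin m → ℝ | ∀ h l, ¬ E h l → z h l = 0} := by
      simp only [Set.ofPred_forall]
      exact isClosed_iInter fun h => isClosed_iInter fun l => isClosed_iInter fun _ =>
        isClosed_eq (by fun_prop) (by fun_prop)
    have c3 : IsClosed {z : Fin m → Fin m → ℝ | ∀ h, ∑ l, z h l ≤ A h} := by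
      simp only [Set.ofPred_forall]
      exact isClosed_iInter fun h => isClosed_le (by fun_prop) (by fun_prop)
    have c4 : IsClosed {z : Fin m → Fin m → ℝ | ∀ l, ∑ h, z h l ≤ B l} := by
      simp only [Set.ofPred_forall]
      exact isClosed_iInter fun h => isClosed_le (by fun_prop) (by fun_prop)
    exact c1.inter (c2.inter (c3.inter c4))
  have hsub : Z ⊆ Set.Icc (fun _ _ => 0) (fun h _ => A h) := by
    rintro z ⟨z1, z2, z3, z4⟩
    refine ⟨fun h l => z1 h l, fun h l => ?_⟩
    exact (Finset.single_le_sum (fun l _ => z1 h l) (mem_univ l)).trans (z3 h)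
  have hcomp : IsCompact Z := isCompact_Icc.of_isClosed_subset hcl hsub
  have hne : Z.Nonempty := ⟨fun _ _ => 0, by simp, by simp, by simpa using hA, by simpa using hB⟩
  obtain ⟨z, hz, hmax⟩ := hcomp.exists_isMaxOn hne
    (f := fun z => ∑ h, ∑ l, z h l) (by fun_prop)
  refine ⟨z, hz.1, hz.2.1, hz.2.2.1, hz.2.2.2, ?_⟩
  obtain ⟨z1, z2, z3, z4⟩ := hz
  intro h l hE
  by_contra hcon
  push Not at hcon
  obtain ⟨n1, n2⟩ := hcon
  have p1 : 0 < A h - ∑ l', z h l' := sub_pos.mpr (lt_of_le_of_ne (z3 h) n1)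
  have p2 : 0 < B l - ∑ h', z h' l := sub_pos.mpr (lt_of_le_of_ne (z4 l) n2)
  obtain ⟨ε, he, he1, he2⟩ : ∃ ε : ℝ, 0 < ε ∧ ε ≤ A h - ∑ l', z h l' ∧
      ε ≤ B l - ∑ h', z h' l := ⟨_, lt_min p1 p2, min_le_left _ _, min_le_right _ _⟩
  have rowsum : ∀ a, ∑ b, (z a b + if a = h then (if b = l then ε else 0) else 0) =
      ∑ b, z a b + if a = h then ε else 0 := by
    intro a
    rw [Finset.sum_add_distrib]
    by_cases hah : a = h <;> simp [hah]
  have hz' : (fun a b => z a b + if a = h then (if b = l then ε else 0) else 0) ∈ Z := by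
    refine ⟨?_, ?_, ?_, ?_⟩
    · intro a b
      have := z1 a b
      dsimp only
      split_ifs <;> linarith
    · intro a b hab
      dsimp only
      rw [z2 a b hab]
      by_cases ha : a = h
      · by_cases hb : b = l
        · exact absurd (ha ▸ hb ▸ hE) hab
        · simp [hb]
      · simp [ha]
    · intro a
      rw [rowsum]
      by_cases ha : a = h
      · rw [if_pos ha, ha]; linarith
      · rw [if_neg ha]; linarith [z3 a]
    · intro b
      rw [Finset.sum_add_distrib, Finset.sum_ite_eq']
      by_cases hb : b = l
      · simp only [mem_univ, if_true, hb]; linarith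
      · simp only [mem_univ, if_true, if_neg hb]; linarith [z4 b]
  have := hmax hz'
  simp only [Set.mem_ofPred_eq, rowsum] at this
  rw [Finset.sum_add_distrib, Finset.sum_ite_eq'] at this
  simp only [mem_univ, if_true] at this
  linarith

lemma ach_flow (q : Fin m → ℝ) (C : Fin m → Fin m → ℝ) (R : ℝ)
    (hq : ∀ i, 0 ≤ q i) (hC : ∀ l i, 0 ≤ C l i)
    (H : Finset (Fin m)) (hH : H.Nonempty) (u w : Fin m) (hu : u ∉ H) (hw : w ∉ H) (huw : u ≠ w)
    (P : ℝ) (hP : 0 ≤ P) (y : Fin m → Fin m → ℝ) (b : Fin m → ℝ)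
    (hy0 : ∀ h l, 0 ≤ y h l) (hy1 : ∀ h ∈ H, ∑ l ∈ Hᶜ, y h l ≤ 1)
    (hb0 : ∀ l, 0 ≤ b l) (hb1 : ∀ l, b l ≤ q l)
    (hs : ∀ l ∉ H, 0 ≤ ∑ h ∈ H, y h l * q h * (C h l - P) + b l * (C l l - P))
    (lam : Fin m → ℝ) (hl0 : ∀ h ∈ H, 0 ≤ lam h) (hl1 : ∑ h ∈ H, lam h ≤ 1)
    (h1 : ∀ h ∈ H, lam h * (P * ∑ i ∈ Hᶜ, (q i - b i)) ≤
      (1 - ∑ l ∈ Hᶜ, y h l) * (q h * (C h h - P)))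
    (hR : R ≤ P * (∑ i ∈ H, q i + ∑ i ∈ Hᶜ, b i
      + (∑ h ∈ H, lam h) * ∑ i ∈ Hᶜ, (q i - b i))) : Ach q C R := by
  classical
  obtain ⟨ν, hνl, hνr⟩ : ∃ ν : Fin m → (Fin m ⊕ {l // l ∈ Hᶜ}) → ℝ, (∀ i k, ν i (Sum.inl k) =
      if k ∈ H then ((if i = k then (1 - ∑ l ∈ Hᶜ, y i l) * q i else 0)
        + (if i ∈ H then 0 else lam k * (q i - b i)))
      else (if i = k then (1 - ∑ h ∈ H, lam h) * (q i - b i) else 0)) ∧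
      (∀ i l, ν i (Sum.inr l) = (if i ∈ H then y i l * q i else 0)
        + (if i = (l : Fin m) then b i else 0)) :=
    ⟨fun i => Sum.elim (fun k => if k ∈ H then ((if i = k then (1 - ∑ l ∈ Hᶜ, y i l) * q i else 0)
        + (if i ∈ H then 0 else lam k * (q i - b i)))
      else (if i = k then (1 - ∑ h ∈ H, lam h) * (q i - b i) else 0))
      (fun l => (if i ∈ H then y i l * q i else 0) + (if i = (l : Fin m) then b i else 0)),
      fun _ _ => rfl, fun _ _ => rfl⟩
  have hνH : ∀ k ∈ H, ∀ g : Fin m → ℝ, ∑ i, ν i (Sum.inl k) * g i =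
      (1 - ∑ l ∈ Hᶜ, y k l) * q k * g k + lam k * ∑ i ∈ Hᶜ, (q i - b i) * g i := by
    intro k hk g
    simp only [hνl, if_pos hk, add_mul, ite_mul, zero_mul, Finset.sum_add_distrib,
      Finset.sum_ite_eq', mem_univ, if_true, sum_off]
    rw [Finset.mul_sum]
    simp only [mul_assoc]
  have hνR : ∀ l : {l // l ∈ Hᶜ}, ∀ g : Fin m → ℝ, ∑ i, ν i (Sum.inr l) * g i =
      ∑ i ∈ H, y i l * q i * g i + b l * g l := by
    intro l g
    simp only [hνr, add_mul, ite_mul, zero_mul, Finset.sum_add_distrib,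
      Finset.sum_ite_eq', mem_univ, if_true, sum_on]
  have hνH1 : ∀ k ∈ H, ∑ i, ν i (Sum.inl k) =
      (1 - ∑ l ∈ Hᶜ, y k l) * q k + lam k * ∑ i ∈ Hᶜ, (q i - b i) := by
    intro k hk
    have := hνH k hk (fun _ => 1)
    simpa using this
  have hνR1 : ∀ l : {l // l ∈ Hᶜ}, ∑ i, ν i (Sum.inr l) = ∑ i ∈ H, y i l * q i + b l := by
    intro l
    have := hνR l (fun _ => 1)
    simpa using this
  obtain ⟨h0, hh0⟩ := hH
  obtain ⟨N, hNl, hNr⟩ : ∃ N : (Fin m ⊕ {l // l ∈ Hᶜ}) → Finset (Fin m),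
      (∀ k, N (Sum.inl k) = if k ∈ H then insert k Hᶜ else {k}) ∧
      (∀ l, N (Sum.inr l) = insert (l : Fin m) H) :=
    ⟨Sum.elim (fun k => if k ∈ H then insert k Hᶜ else {k}) (fun l => insert (l : Fin m) H),
      fun _ => rfl, fun _ => rfl⟩
  have hlr : ∀ k l, N (Sum.inl k) ≠ N (Sum.inr l) := by
    rintro k ⟨l, hl⟩ h
    have hl' := mem_compl.mp hl
    rw [hNl, hNr] at h
    by_cases hk : k ∈ H
    · rw [if_pos hk] at h
      have a1 : u ∈ insert l H := h ▸ mem_insert_of_mem (mem_compl.mpr hu)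
      have a2 : w ∈ insert l H := h ▸ mem_insert_of_mem (mem_compl.mpr hw)
      have a1' := (mem_insert.mp a1).resolve_right hu
      have a2' := (mem_insert.mp a2).resolve_right hw
      exact huw (a1'.trans a2'.symm)
    · rw [if_neg hk] at h
      have a1 : l ∈ ({k} : Finset (Fin m)) := h ▸ mem_insert_self _ _
      have a2 : h0 ∈ ({k} : Finset (Fin m)) := h ▸ mem_insert_of_mem hh0
      have : l = h0 := (mem_singleton.mp a1).trans (mem_singleton.mp a2).symm
      exact hl' (this ▸ hh0)
  refine ⟨Fin m ⊕ {l // l ∈ Hᶜ}, inferInstance, N, ν,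
    fun _ => P, Sum.elim (fun k => if k ∈ H then P else 0) (fun _ => P),
    ?_, ?_, ?_, ?_, fun _ => hP, ?_, ?_⟩
  · rintro (a | a) (c | c) hab
    · rw [hNl, hNl] at hab
      congr 1
      by_cases ha : a ∈ H <;> by_cases hb : c ∈ H
      · rw [if_pos ha, if_pos hb] at hab
        have : a ∈ insert c Hᶜ := hab ▸ mem_insert_self _ _
        rcases mem_insert.mp this with h | h
        · exact h
        · exact absurd ha (mem_compl.mp h)
      · rw [if_pos ha, if_neg hb] at hab
        have : a ∈ ({c} : Finset (Fin m)) := hab ▸ mem_insert_self _ _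
        exact mem_singleton.mp this
      · rw [if_neg ha, if_pos hb] at hab
        have : c ∈ ({a} : Finset (Fin m)) := hab ▸ mem_insert_self _ _
        exact (mem_singleton.mp this).symm
      · rw [if_neg ha, if_neg hb] at hab
        exact Finset.singleton_injective hab
    · exact absurd hab (hlr a c)
    · exact absurd hab.symm (hlr c a)
    · rw [hNr, hNr] at hab
      have : (a : Fin m) ∈ insert (c : Fin m) H := hab ▸ mem_insert_self _ _
      have := (mem_insert.mp this).resolve_right (mem_compl.mp a.2)
      rw [Subtype.ext this]
  · rintro i (k | l)
    · rw [hνl]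
      by_cases hk : k ∈ H
      · rw [if_pos hk]
        apply add_nonneg
        · split_ifs with hik
          · exact mul_nonneg (by linarith [hy1 i (hik ▸ hk)]) (hq i)
          · exact le_rfl
        · split_ifs
          · exact le_rfl
          · exact mul_nonneg (hl0 k hk) (by linarith [hb1 i])
      · rw [if_neg hk]
        split_ifs
        · exact mul_nonneg (by linarith) (by linarith [hb1 i])
        · exact le_rfl
    · rw [hνr]
      apply add_nonneg
      · split_ifs
        · exact mul_nonneg (hy0 _ _) (hq i)
        · exact le_rfl
      · split_ifs
        · exact hb0 i
        · exact le_rfl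
  · rintro i (k | l) h
    · rw [hνl] at h
      rw [hNl]
      by_cases hk : k ∈ H
      · rw [if_pos hk] at h
        simp only [if_pos hk]
        by_cases hik : i = k
        · rw [hik]; exact mem_insert_self _ _
        · by_cases hi : i ∈ H
          · simp [hik, hi] at h
          · exact mem_insert_of_mem (mem_compl.mpr hi)
      · rw [if_neg hk] at h
        simp only [if_neg hk]
        by_cases hik : i = k
        · simp [hik]
        · simp [hik] at h
    · rw [hνr] at h
      rw [hNr]
      by_cases hi : i ∈ H
      · exact mem_insert_of_mem hi
      · by_cases hil : i = l
        · rw [hil]; exact mem_insert_self _ _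
        · simp [hi, hil] at h
  · intro i
    rw [Fintype.sum_sum_type]
    simp only [hνl, hνr]
    rw [Finset.sum_coe_sort Hᶜ
      (fun l => (if i ∈ H then y i l * q i else 0) + (if i = l then b i else 0)),
      ← Finset.sum_add_sum_compl H,
      Finset.sum_congr rfl (fun k (hk : k ∈ H) => if_pos hk),
      Finset.sum_congr rfl (fun k (hk : k ∈ Hᶜ) => if_neg (mem_compl.mp hk)),
      Finset.sum_add_distrib, Finset.sum_ite_eq, Finset.sum_ite_eq, Finset.sum_add_distrib,
      Finset.sum_ite_eq]
    by_cases hi : i ∈ H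
    · simp only [hi, if_true, mem_compl, not_true, if_false, Finset.sum_const_zero,
        ← Finset.sum_mul]
      ring
    · simp only [hi, if_false, mem_compl, not_false_iff, if_true, Finset.sum_const_zero,
        ← Finset.sum_mul]
      ring
  · rintro (k | l)
    · by_cases hk : k ∈ H
      · right
        refine ⟨k, by simp [hk], ?_, fun j hj => by simp [hk] at hj⟩
        rw [hνH k hk]
        have : -(P * ∑ i ∈ Hᶜ, (q i - b i)) ≤ ∑ i ∈ Hᶜ, (q i - b i) * (C i k - P) := by
          rw [Finset.mul_sum, ← Finset.sum_neg_distrib]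
          refine Finset.sum_le_sum fun i _ => ?_
          nlinarith [mul_nonneg (sub_nonneg.mpr (hb1 i)) (hC i k)]
        nlinarith [mul_le_mul_of_nonneg_left this (hl0 k hk), h1 k hk]
      · left
        simp [hk]
    · right
      refine ⟨l, le_rfl, ?_, fun j hj => absurd hj (lt_irrefl _)⟩
      rw [hνR]
      exact hs l (mem_compl.mp l.2)
  · refine hR.trans (le_of_eq ?_)
    rw [Fintype.sum_sum_type]
    simp only [Sum.elim_inl, Sum.elim_inr, hνR1]
    rw [Finset.sum_coe_sort Hᶜ (fun l => (∑ i ∈ H, y i l * q i + b l) * P)]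
    have e : ∀ k, (∑ i, ν i (Sum.inl k)) * (if k ∈ H then P else 0) =
        (if k ∈ H then ((1 - ∑ l ∈ Hᶜ, y k l) * q k + lam k * ∑ i ∈ Hᶜ, (q i - b i)) * P
          else 0) := by
      intro k
      by_cases hk : k ∈ H
      · simp only [if_pos hk, hνH1 k hk]
      · simp [hk]
    simp only [e, sum_on]
    have sw : ∑ l ∈ Hᶜ, ∑ i ∈ H, y i l * q i = ∑ i ∈ H, (∑ l ∈ Hᶜ, y i l) * q i := by
      rw [Finset.sum_comm]
      refine Finset.sum_congr rfl fun i _ => ?_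
      rw [Finset.sum_mul]
    simp only [← Finset.sum_mul, Finset.sum_add_distrib, sw, sub_mul, one_mul,
      Finset.sum_sub_distrib]
    ring

lemma div_max_mul (a b : ℝ) (ha : 0 ≤ a) (hb : 0 ≤ b) : b / max a b * a = min a b := by
  rcases le_total a b with h | h
  · rw [max_eq_right h, min_eq_left h]
    rcases hb.eq_or_lt with h0 | h0
    · have : a = 0 := le_antisymm (h0 ▸ h) ha
      rw [this]; simp
    · rw [div_self h0.ne', one_mul]
  · rw [max_eq_left h, min_eq_right h]
    rcases ha.eq_or_lt with h0 | h0
    · have : b = 0 := le_antisymm (h0 ▸ h) hb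
      rw [this]; simp
    · rw [div_mul_cancel₀ _ h0.ne']

/-- Uniform pricing with pooling. -/
lemma core_zero (q : Fin m → ℝ) (C : Fin m → Fin m → ℝ)
    (hq : ∀ i, 0 ≤ q i) (hq1 : ∑ i, q i = 1)
    (hC : ∀ l i, 0 ≤ C l i) (hCt : ∀ l i, C l i ≤ C l l) (c : ℝ) (hc : 0 ≤ c)
    (hG : c ≤ ∑ i ∈ univ.filter (fun i => c ≤ C i i), q i * C i i) : Ach q C c := by
  classical
  set T := univ.filter (fun i => c ≤ C i i) with hT
  have hTm : ∀ i ∈ T, c ≤ C i i := fun i hi => (mem_filter.mp hi).2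
  obtain ⟨D, hD⟩ : ∃ D, D = ∑ i ∈ T, q i * (C i i - c) := ⟨_, rfl⟩
  have hD2 : D = ∑ i ∈ T, q i * C i i - c * ∑ i ∈ T, q i := by
    rw [hD, Finset.mul_sum, ← Finset.sum_sub_distrib]
    exact Finset.sum_congr rfl fun i _ => by ring
  have hQ : ∑ i ∈ T, q i + ∑ i ∈ Tᶜ, q i = 1 := by rw [Finset.sum_add_sum_compl, hq1]
  have hQL : 0 ≤ ∑ i ∈ Tᶜ, q i := Finset.sum_nonneg fun i _ => hq i
  have hDQ : c * ∑ i ∈ Tᶜ, q i ≤ D := by rw [hD2]; nlinarith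
  have hcQ : 0 ≤ c * ∑ i ∈ Tᶜ, q i := mul_nonneg hc hQL
  have hD0 : 0 ≤ D := hcQ.trans hDQ
  have hΛ : ∑ h ∈ T, q h * (C h h - c) / D = D / D := by rw [← Finset.sum_div, ← hD]
  refine ach_two q C c hq hC hCt T ∅ 0 c le_rfl hc (by simp) (by simp)
    (fun h => q h * (C h h - c) / D) ?_ ?_ ?_ (by simp) ?_
  · intro h hh
    exact div_nonneg (mul_nonneg (hq h) (by linarith [hTm h hh])) hD0
  · rw [hΛ]; exact div_self_le_one D
  · intro h hh
    have e0 : 0 ≤ q h * (C h h - c) := mul_nonneg (hq h) (by linarith [hTm h hh])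
    rcases hD0.eq_or_lt with h0 | h0
    · rw [← h0]; simpa using e0
    · rw [div_mul_eq_mul_div, div_le_iff₀ h0]
      exact mul_le_mul_of_nonneg_left hDQ e0
  · rw [hΛ]
    have : D / D * (c * ∑ i ∈ Tᶜ, q i) = c * ∑ i ∈ Tᶜ, q i := by
      rcases hD0.eq_or_lt with h0 | h0
      · have : c * ∑ i ∈ Tᶜ, q i = 0 := by linarith
        rw [this, mul_zero]
      · rw [div_self h0.ne', one_mul]
    have e : ∑ i ∈ T, q i = 1 - ∑ i ∈ Tᶜ, q i := by linarith
    have : c * (∑ i ∈ T, q i + D / D * ∑ i ∈ Tᶜ, q i) = c := by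
      calc _ = c * ∑ i ∈ T, q i + D / D * (c * ∑ i ∈ Tᶜ, q i) := by ring
        _ = c * (∑ i ∈ T, q i + ∑ i ∈ Tᶜ, q i) := by rw [this]; ring
        _ = c := by rw [hQ, mul_one]
    rw [this]; simp

/-- Large flow: pooling flows into low products. -/
lemma core_one (q : Fin m → ℝ) (C : Fin m → Fin m → ℝ)
    (hq : ∀ i, 0 ≤ q i) (hq1 : ∑ i, q i = 1)
    (hC : ∀ l i, 0 ≤ C l i)
    (hW : ∑ i, q i * C i i = 1)
    (H : Finset (Fin m)) (e : Fin m → ℝ) (he : ∀ h, e h = q h * (C h h - 0.55))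
    (hepos : ∀ h ∈ H, 0 < e h)
    (z : Fin m → Fin m → ℝ) (hz0 : ∀ h l, 0 ≤ z h l)
    (hzE : ∀ h l, z h l ≠ 0 → h ∈ H ∧ l ∉ H ∧ 0.46 ≤ C l l ∧ 0.3 * e h ≤ q h * (C h l - 0.55))
    (hrow : ∀ h ∈ H, ∑ l, z h l ≤ e h) (hcol : ∀ l, ∑ h, z h l ≤ 0.3 * q l)
    (hF : 0.02 ≤ ∑ h, ∑ l, z h l)
    (hGH : 0.487 ≤ ∑ i ∈ H, q i * C i i) (hGH2 : ∑ i ∈ H, q i * C i i ≤ 0.5017) :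
    Ach q C 0.5017 := by
  classical
  have hH : H.Nonempty := by
    rw [Finset.nonempty_iff_ne_empty]
    rintro rfl
    simp at hGH
    norm_num at hGH
  have hrowL : ∀ h, ∑ l ∈ Hᶜ, z h l = ∑ l, z h l := by
    intro h
    refine Finset.sum_subset (subset_univ _) fun l _ hl => ?_
    by_contra hne
    exact hl (mem_compl.mpr (hzE h l hne).2.1)
  have hcolH : ∀ l, ∑ h ∈ H, z h l = ∑ h, z h l := by
    intro l
    refine Finset.sum_subset (subset_univ _) fun h _ hh => ?_
    by_contra hne
    exact hh (hzE h l hne).1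
  have hFH : ∑ h ∈ H, ∑ l, z h l = ∑ h, ∑ l, z h l := by
    refine Finset.sum_subset (subset_univ _) fun h _ hh => ?_
    refine Finset.sum_eq_zero fun l _ => ?_
    by_contra hne
    exact hh (hzE h l hne).1
  have hFL : ∑ l ∈ Hᶜ, ∑ h, z h l = ∑ h, ∑ l, z h l := by
    rw [Finset.sum_comm]
    exact Finset.sum_congr rfl fun h _ => hrowL h
  obtain ⟨F, hFdef⟩ : ∃ F, F = ∑ h, ∑ l, z h l := ⟨_, rfl⟩
  rw [← hFdef] at hF hFH hFL
  have hQ : ∑ i ∈ H, q i + ∑ i ∈ Hᶜ, q i = 1 := by rw [Finset.sum_add_sum_compl, hq1]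
  have hX : ∑ i ∈ H, q i * C i i + ∑ i ∈ Hᶜ, q i * C i i = 1 := by
    rw [Finset.sum_add_sum_compl, hW]
  have hD : ∑ h ∈ H, e h = ∑ i ∈ H, q i * C i i - 0.55 * ∑ i ∈ H, q i := by
    rw [Finset.mul_sum, ← Finset.sum_sub_distrib]
    exact Finset.sum_congr rfl fun i _ => by rw [he]; ring
  by_cases hL : ∃ u w, u ∉ H ∧ w ∉ H ∧ u ≠ w
  · obtain ⟨u, w, hu, hw, huw⟩ := hL
    obtain ⟨b, hb⟩ : ∃ b : Fin m → ℝ, ∀ l, b l = (∑ h, z h l) / 0.3 := ⟨_, fun _ => rfl⟩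
    obtain ⟨r, hr⟩ : ∃ r : Fin m → ℝ, ∀ h, r h = e h - ∑ l, z h l := ⟨_, fun _ => rfl⟩
    have hb1 : ∀ l, b l ≤ q l := by
      intro l
      rw [hb, div_le_iff₀ (by norm_num)]
      linarith [hcol l]
    have hbs : ∑ l ∈ Hᶜ, b l = F / 0.3 := by
      rw [Finset.sum_congr rfl (fun l _ => hb l), ← Finset.sum_div, hFL]
    have hrs : ∑ h ∈ H, r h = ∑ h ∈ H, e h - F := by
      rw [Finset.sum_congr rfl (fun l _ => hr l), Finset.sum_sub_distrib, hFH]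
    have hr0 : ∀ h ∈ H, 0 ≤ r h := fun h hh => by rw [hr]; linarith [hrow h hh]
    obtain ⟨A, hA⟩ : ∃ A, A = 0.55 * ∑ i ∈ Hᶜ, (q i - b i) := ⟨_, rfl⟩
    obtain ⟨G, hG⟩ : ∃ G, G = ∑ h ∈ H, r h := ⟨_, rfl⟩
    have hA0 : 0 ≤ A := by
      rw [hA]
      exact mul_nonneg (by norm_num) (Finset.sum_nonneg fun i _ => by linarith [hb1 i])
    have hG0 : 0 ≤ G := by rw [hG]; exact Finset.sum_nonneg hr0
    have hM0 : 0 ≤ max A G := hA0.trans (le_max_left _ _)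
    have hΛ : ∑ h ∈ H, r h / max A G = G / max A G := by rw [← Finset.sum_div, ← hG]
    refine ach_flow q C _ hq hC H hH u w hu hw huw 0.55 (by norm_num)
      (fun h l => if h ∈ H then z h l / e h else 0) b ?_ ?_ ?_ hb1 ?_
      (fun h => r h / max A G) ?_ ?_ ?_ ?_
    · intro h l
      split_ifs with hh
      · exact div_nonneg (hz0 h l) (hepos h hh).le
      · exact le_rfl
    · intro h hh
      simp only [if_pos hh]
      rw [← Finset.sum_div, hrowL, div_le_one (hepos h hh)]
      exact hrow h hh
    · intro l
      rw [hb]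
      exact div_nonneg (Finset.sum_nonneg fun h _ => hz0 h l) (by norm_num)
    · intro l hl
      have e1 : b l * (C l l - 0.55) = ∑ h ∈ H, z h l / 0.3 * (C l l - 0.55) := by
        rw [hb, ← hcolH, ← Finset.sum_mul, ← Finset.sum_div]
      rw [e1, ← Finset.sum_add_distrib]
      refine Finset.sum_nonneg fun h hh => ?_
      rw [if_pos hh]
      by_cases hzz : z h l = 0
      · simp [hzz]
      · obtain ⟨-, -, h3, h4⟩ := hzE h l hzz
        have hp := hepos h hh
        have k1 : 0.3 * z h l ≤ z h l / e h * q h * (C h l - 0.55) := by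
          rw [mul_assoc, div_mul_eq_mul_div, le_div_iff₀ hp]
          nlinarith [mul_le_mul_of_nonneg_left h4 (hz0 h l)]
        have k2 : -(0.3 * z h l) ≤ z h l / 0.3 * (C l l - 0.55) := by
          rw [div_mul_eq_mul_div, le_div_iff₀ (by norm_num)]
          nlinarith [hz0 h l]
        linarith
    · intro h hh
      exact div_nonneg (hr0 h hh) hM0
    · rw [hΛ]
      exact div_le_one_of_le₀ (le_max_right _ _) hM0
    · intro h hh
      simp only [if_pos hh]
      rw [← hA, ← he, ← Finset.sum_div, hrowL]
      have hp := hepos h hh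
      have k1 : (1 - (∑ l, z h l) / e h) * e h = r h := by
        rw [hr]; field_simp
      rw [k1, div_mul_eq_mul_div]
      refine div_le_of_le_mul₀ hM0 (hr0 h hh) ?_
      exact mul_le_mul_of_nonneg_left (le_max_left _ _) (hr0 h hh)
    · rw [hΛ]
      have k := div_max_mul A G hA0 hG0
      have k2 : (0.55 : ℝ) * (∑ i ∈ H, q i + ∑ i ∈ Hᶜ, b i
          + G / max A G * ∑ i ∈ Hᶜ, (q i - b i)) =
          0.55 * (∑ i ∈ H, q i + ∑ i ∈ Hᶜ, b i) + min A G := by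
        rw [← k]
        nth_rewrite 3 [hA]
        ring
      rw [k2]
      rcases min_choice A G with h | h
      · rw [h, hA, Finset.sum_sub_distrib]
        linarith
      · rw [h, hG, hrs, hD, hbs]
        have : F / 0.3 = F * (10 / 3) := by ring
        rw [this]
        linarith
  · push Not at hL
    have hne : ∃ j, j ∉ H := by
      by_contra hcon
      push Not at hcon
      have : H = univ := by ext i; simp [hcon i]
      rw [this, hW] at hGH2
      norm_num at hGH2
    obtain ⟨j, hj⟩ := hne
    have hHc : Hᶜ = {j} := by
      ext i
      rw [mem_compl, mem_singleton]
      exact ⟨fun hi => hL i j hi hj, fun hi => hi ▸ hj⟩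
    refine ach_full q C _ hq hq1 hC j ?_
    rw [← Finset.sum_add_sum_compl H]
    rw [hHc, Finset.sum_singleton]
    rw [hHc, Finset.sum_singleton] at hX
    have : 0.3 * F ≤ ∑ i ∈ H, q i * C i j := by
      rw [← hFH, Finset.mul_sum]
      refine Finset.sum_le_sum fun h hh => ?_
      rw [← hrowL, hHc, Finset.sum_singleton]
      by_cases hzz : z h j = 0
      · rw [hzz, mul_zero]; exact mul_nonneg (hq h) (hC h j)
      · have h4 := (hzE h j hzz).2.2.2
        have h5 := hrow h hh
        rw [← hrowL, hHc, Finset.sum_singleton] at h5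
        nlinarith [hq h]
    linarith

/-- Small maximal flow: two prices. -/
lemma core_two (q : Fin m → ℝ) (C : Fin m → Fin m → ℝ)
    (hq : ∀ i, 0 ≤ q i) (hq1 : ∑ i, q i = 1)
    (hC : ∀ l i, 0 ≤ C l i) (hCt : ∀ l i, C l i ≤ C l l)
    (hW : ∑ i, q i * C i i = 1)
    (H B : Finset (Fin m)) (e : Fin m → ℝ) (he : ∀ h, e h = q h * (C h h - 0.55))
    (hH : ∀ h ∈ H, 2.1 ≤ C h h) (hBH : ∀ i ∈ B, i ∉ H) (hB : ∀ i ∈ B, 0.46 ≤ C i i)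
    (hE : ∀ h ∈ H, ∀ k ∈ B, q h * (C h k - 0.55) ≤ 0.3 * e h)
    (hX : ∑ i ∈ H, q i * C i i ≤ 0.5017)
    (hD : 0.463 ≤ ∑ i ∈ H, e i) (hQH : ∑ i ∈ H, q i ≤ 0.0068)
    (hQB : 0.84 ≤ ∑ i ∈ B, q i) : Ach q C 0.5017 := by
  classical
  have hQ : ∑ i ∈ H, q i + ∑ i ∈ Hᶜ, q i = 1 := by rw [Finset.sum_add_sum_compl, hq1]
  have hXX : ∑ i ∈ H, q i * C i i + ∑ i ∈ Hᶜ, q i * C i i = 1 := by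
    rw [Finset.sum_add_sum_compl, hW]
  have hDD : ∑ h ∈ H, e h = ∑ i ∈ H, q i * C i i - 0.55 * ∑ i ∈ H, q i := by
    rw [Finset.mul_sum, ← Finset.sum_sub_distrib]
    exact Finset.sum_congr rfl fun i _ => by rw [he]; ring
  have hQ0 : 0 ≤ ∑ i ∈ H, q i := Finset.sum_nonneg fun i _ => hq i
  obtain ⟨d, hd⟩ : ∃ d, d = ∑ i ∈ Hᶜ, q i * C i i + (1.5 - 0.46) * ∑ i ∈ Hᶜ, q i := ⟨_, rfl⟩
  have hd0 : 0 < d := by rw [hd]; linarith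
  have hn0 : ∀ h ∈ H, 0 ≤ 0.7 * e h - 1.04 * q h := by
    intro h hh
    rw [he]
    nlinarith [mul_nonneg (hq h) (sub_nonneg.mpr (hH h hh)), hq h]
  obtain ⟨Λ, hΛ⟩ : ∃ Λ, Λ = ∑ h ∈ H, (0.7 * e h - 1.04 * q h) / d := ⟨_, rfl⟩
  have hΛ2 : Λ = (0.7 * ∑ h ∈ H, e h - 1.04 * ∑ h ∈ H, q h) / d := by
    rw [hΛ, ← Finset.sum_div, Finset.sum_sub_distrib, Finset.mul_sum, Finset.mul_sum]
  have hΛ1 : Λ ≤ 1 := by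
    rw [hΛ2, div_le_one hd0, hd]; linarith
  have hΛ0 : 0.19 ≤ Λ := by
    rw [hΛ2, le_div_iff₀ hd0, hd]; linarith
  refine ach_two q C _ hq hC hCt H B 0.46 1.5 (by norm_num) (by norm_num) hBH hB
    (fun h => (0.7 * e h - 1.04 * q h) / d) ?_ ?_ ?_ ?_ ?_
  · intro h hh; exact div_nonneg (hn0 h hh) hd0.le
  · rw [← hΛ]; exact hΛ1
  · intro h hh
    have k1 : 1.5 * ∑ i ∈ Hᶜ, q i ≤ d := by rw [hd]; linarith
    calc _ ≤ (0.7 * e h - 1.04 * q h) / d * d :=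
          mul_le_mul_of_nonneg_left k1 (div_nonneg (hn0 h hh) hd0.le)
      _ = 0.7 * e h - 1.04 * q h := div_mul_cancel₀ _ hd0.ne'
      _ ≤ _ := by
        rw [he]
        nlinarith [mul_nonneg (hq h) (sub_nonneg.mpr (hH h hh)), hq h]
  · intro h hh k hk
    rw [← hd, div_mul_cancel₀ _ hd0.ne']
    have := hE h hh k hk
    rw [he] at this ⊢
    nlinarith [hq h]
  · rw [← hΛ]
    have k1 : 0.99 ≤ ∑ i ∈ Hᶜ, q i := by linarith
    nlinarith [mul_le_mul_of_nonneg_left k1 (by linarith : (0:ℝ) ≤ Λ),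
      mul_le_mul_of_nonneg_left hQB (by linarith : (0:ℝ) ≤ 1 - Λ)]

lemma core (q : Fin m → ℝ) (C : Fin m → Fin m → ℝ)
    (hq : ∀ i, 0 ≤ q i) (hq1 : ∑ i, q i = 1)
    (hC : ∀ l i, 0 ≤ C l i) (hCt : ∀ l i, C l i ≤ C l l)
    (hW : ∑ i, q i * C i i = 1) : Ach q C 0.5017 := by
  classical
  by_cases hG : 0.5017 ≤ ∑ i ∈ univ.filter (fun i => 0.5017 ≤ C i i), q i * C i i
  · exact core_zero q C hq hq1 hC hCt _ (by norm_num) hG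
  set T := univ.filter (fun i => 0.5017 ≤ C i i) with hT
  push Not at hG
  have hQT : ∑ i ∈ T, q i + ∑ i ∈ Tᶜ, q i = 1 := by rw [Finset.sum_add_sum_compl, hq1]
  have hXT : ∑ i ∈ T, q i * C i i + ∑ i ∈ Tᶜ, q i * C i i = 1 := by
    rw [Finset.sum_add_sum_compl, hW]
  have hTc : ∀ i ∈ Tᶜ, C i i ≤ 0.5017 := by
    intro i hi
    by_contra h
    push Not at h
    exact (mem_compl.mp hi) (mem_filter.mpr ⟨mem_univ _, h.le⟩)
  have hXTc : ∑ i ∈ Tᶜ, q i * C i i ≤ 0.5017 * ∑ i ∈ Tᶜ, q i := by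
    rw [Finset.mul_sum]
    refine Finset.sum_le_sum fun i hi => ?_
    nlinarith [mul_le_mul_of_nonneg_left (hTc i hi) (hq i)]
  have hqs : ∀ A A' : Finset (Fin m), A ⊆ A' → ∑ i ∈ A, q i ≤ ∑ i ∈ A', q i := fun A A' h =>
    Finset.sum_le_sum_of_subset_of_nonneg h fun i _ _ => hq i
  have hxs : ∀ A A' : Finset (Fin m), A ⊆ A' →
      ∑ i ∈ A, q i * C i i ≤ ∑ i ∈ A', q i * C i i := fun A A' h =>
    Finset.sum_le_sum_of_subset_of_nonneg h fun i _ _ => mul_nonneg (hq i) (hC i i)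
  have hQT2 : ∑ i ∈ T, q i ≤ 0.0068 := by linarith
  have hQT0 : 0 ≤ ∑ i ∈ T, q i := Finset.sum_nonneg fun i _ => hq i
  -- low mass
  set U := univ.filter (fun i => C i i < 0.46) with hU
  have hUT : U ⊆ Tᶜ := by
    intro i hi
    have h1 := (mem_filter.mp hi).2
    rw [mem_compl]
    intro h
    have h2 := (mem_filter.mp h).2
    linarith
  have hQU : 0.0417 * ∑ i ∈ U, q i ≤ 0.0034 := by
    have h1 : 0.0417 * ∑ i ∈ U, q i ≤ ∑ i ∈ U, q i * (0.5017 - C i i) := by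
      rw [Finset.mul_sum]
      refine Finset.sum_le_sum fun i hi => ?_
      have h1 := (mem_filter.mp hi).2
      nlinarith [mul_le_mul_of_nonneg_left h1.le (hq i)]
    have h2 : ∑ i ∈ U, q i * (0.5017 - C i i) ≤ ∑ i ∈ Tᶜ, q i * (0.5017 - C i i) :=
      Finset.sum_le_sum_of_subset_of_nonneg hUT fun i hi _ =>
        mul_nonneg (hq i) (by linarith [hTc i hi])
    have h3 : ∑ i ∈ Tᶜ, q i * (0.5017 - C i i) =
        0.5017 * ∑ i ∈ Tᶜ, q i - ∑ i ∈ Tᶜ, q i * C i i := by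
      rw [Finset.mul_sum, ← Finset.sum_sub_distrib]
      exact Finset.sum_congr rfl fun i _ => by ring
    linarith
  -- high products
  set H := univ.filter (fun i => 2.1 ≤ C i i ∧ 0 < q i) with hHdef
  have hHm : ∀ h ∈ H, 2.1 ≤ C h h ∧ 0 < q h := fun h hh => (mem_filter.mp hh).2
  have hHT : H ⊆ T := by
    intro i hi
    exact mem_filter.mpr ⟨mem_univ _, by linarith [(hHm i hi).1]⟩
  have hGH : 0.487 ≤ ∑ i ∈ H, q i * C i i := by
    have h1 : ∑ i ∈ T \ H, q i * C i i ≤ 2.1 * ∑ i ∈ T \ H, q i := by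
      rw [Finset.mul_sum]
      refine Finset.sum_le_sum fun i hi => ?_
      have hiH : i ∉ H := (mem_sdiff.mp hi).2
      rcases (hq i).eq_or_lt with h0 | h0
      · rw [← h0]; simp
      · have : C i i < 2.1 := by
          by_contra hcon
          push Not at hcon
          exact hiH (mem_filter.mpr ⟨mem_univ _, hcon, h0⟩)
        nlinarith
    have h2 := Finset.sum_sdiff hHT (f := fun i => q i * C i i)
    have h3 := hqs (T \ H) T sdiff_subset
    linarith
  obtain ⟨e, he⟩ : ∃ e : Fin m → ℝ, ∀ h, e h = q h * (C h h - 0.55) := ⟨_, fun _ => rfl⟩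
  have hepos : ∀ h ∈ H, 0 < e h := by
    intro h hh
    obtain ⟨h1, h2⟩ := hHm h hh
    rw [he]
    exact mul_pos h2 (by linarith)
  obtain ⟨z, hz0, hzE, hzr, hzc, hzmax⟩ := max_flow
    (fun h l => h ∈ H ∧ l ∉ H ∧ 0.46 ≤ C l l ∧ 0.3 * e h ≤ q h * (C h l - 0.55))
    (fun h => if h ∈ H then e h else 0) (fun l => 0.3 * q l)
    (by
      intro h
      split_ifs with hh
      · exact (hepos h hh).le
      · exact le_rfl)
    (fun l => mul_nonneg (by norm_num) (hq l))
  have hXH : ∑ i ∈ H, q i * C i i ≤ 0.5017 := (hxs H T hHT).trans hG.le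
  by_cases hF : 0.02 ≤ ∑ h, ∑ l, z h l
  · refine core_one q C hq hq1 hC hW H e he hepos z hz0 ?_ ?_ hzc hF hGH hXH
    · intro h l hne
      by_contra hcon
      exact hne (hzE h l hcon)
    · intro h hh
      have := hzr h
      rwa [if_pos hh] at this
  · push Not at hF
    set H2 := H.filter (fun h => ∑ l, z h l ≠ e h) with hH2
    set Bs := univ.filter (fun l => l ∉ H ∧ 0.46 ≤ C l l ∧ ∑ h, z h l ≠ 0.3 * q l) with hBs
    set Y := univ.filter (fun l => ∑ h, z h l = 0.3 * q l) with hY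
    have hH2H : H2 ⊆ H := filter_subset _ _
    have hD : ∑ h ∈ H, e h = ∑ i ∈ H, q i * C i i - 0.55 * ∑ i ∈ H, q i := by
      rw [Finset.mul_sum, ← Finset.sum_sub_distrib]
      exact Finset.sum_congr rfl fun i _ => by rw [he]; ring
    have hQH := hqs H T hHT
    have hsat : ∑ h ∈ H \ H2, e h ≤ ∑ h, ∑ l, z h l := by
      have h1 : ∑ h ∈ H \ H2, e h = ∑ h ∈ H \ H2, ∑ l, z h l := by
        refine Finset.sum_congr rfl fun h hh => ?_
        obtain ⟨a1, a2⟩ := mem_sdiff.mp hh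
        by_contra hcon
        exact a2 (mem_filter.mpr ⟨a1, fun h' => hcon h'.symm⟩)
      rw [h1]
      exact Finset.sum_le_sum_of_subset_of_nonneg (subset_univ _) fun h _ _ =>
        Finset.sum_nonneg fun l _ => hz0 h l
    have hD2 := Finset.sum_sdiff hH2H (f := e)
    have hYs : 0.3 * ∑ l ∈ Y, q l ≤ ∑ h, ∑ l, z h l := by
      rw [Finset.sum_comm, Finset.mul_sum,
        ← Finset.sum_congr rfl (fun l (hl : l ∈ Y) => (mem_filter.mp hl).2)]
      exact Finset.sum_le_sum_of_subset_of_nonneg (subset_univ _) fun l _ _ =>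
        Finset.sum_nonneg fun h _ => hz0 h l
    have hcov : (1 : ℝ) ≤ ∑ i ∈ H, q i + ∑ i ∈ U, q i + ∑ i ∈ Y, q i + ∑ i ∈ Bs, q i := by
      rw [← hq1, ← sum_on H, ← sum_on U, ← sum_on Y, ← sum_on Bs, ← Finset.sum_add_distrib,
        ← Finset.sum_add_distrib, ← Finset.sum_add_distrib]
      refine Finset.sum_le_sum fun i _ => ?_
      have n0 := hq i
      have nn : ∀ A : Finset (Fin m), 0 ≤ if i ∈ A then q i else 0 := by
        intro A
        split_ifs
        · exact n0
        · exact le_rfl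
      have n1 := nn H
      have n2 := nn U
      have n3 := nn Y
      have n4 := nn Bs
      by_cases c1 : i ∈ H
      · rw [if_pos c1] at n1 ⊢; linarith
      by_cases c2 : i ∈ U
      · rw [if_pos c2] at n2 ⊢; linarith
      by_cases c3 : i ∈ Y
      · rw [if_pos c3] at n3 ⊢; linarith
      have c4 : i ∈ Bs := by
        refine mem_filter.mpr ⟨mem_univ _, c1, ?_, ?_⟩
        · by_contra hcon
          push Not at hcon
          exact c2 (mem_filter.mpr ⟨mem_univ _, hcon⟩)
        · intro hcon
          exact c3 (mem_filter.mpr ⟨mem_univ _, hcon⟩)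
      rw [if_pos c4] at n4 ⊢; linarith
    refine core_two q C hq hq1 hC hCt hW H2 Bs e he (fun h hh => (hHm h (hH2H hh)).1) ?_ ?_ ?_
      ((hxs H2 H hH2H).trans hXH) ?_ ?_ ?_
    · intro i hi hi2
      exact (mem_filter.mp hi).2.1 (hH2H hi2)
    · intro i hi
      exact (mem_filter.mp hi).2.2.1
    · intro h hh k hk
      obtain ⟨a1, a2⟩ := mem_filter.mp hh
      obtain ⟨-, b1, b2, b3⟩ := mem_filter.mp hk
      by_contra hcon
      push Not at hcon
      rcases hzmax h k ⟨a1, b1, b2, hcon.le⟩ with h' | h'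
      · rw [if_pos a1] at h'
        exact a2 h'
      · exact b3 h'
    · linarith
    · linarith [hqs H2 H hH2H]
    · linarith

lemma ach_scale (q : Fin m → ℝ) (C : Fin m → Fin m → ℝ) (W c : ℝ) (hW : 0 < W)
    (h : Ach q (fun l i => C l i / W) c) : Ach q C (c * W) := by
  obtain ⟨K, iK, N, ν, p, ρ, h1, h2, h3, h4, h5, h6, h7⟩ := h
  have hs : ∀ k j, ∑ l, ν l k * (C l j - p j * W) = (∑ l, ν l k * (C l j / W - p j)) * W := by
    intro k j
    rw [Finset.sum_mul]
    refine Finset.sum_congr rfl fun l _ => ?_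
    field_simp
  refine ⟨K, iK, N, ν, fun i => p i * W, fun k => ρ k * W, h1, h2, h3, h4,
    fun i => mul_nonneg (h5 i) hW.le, ?_, ?_⟩
  · intro k
    rcases h6 k with h | ⟨i, a1, a2, a3⟩
    · left
      exact mul_nonpos_of_nonpos_of_nonneg h hW.le
    · right
      refine ⟨i, mul_le_mul_of_nonneg_right a1 hW.le, ?_, ?_⟩
      · rw [hs]; exact mul_nonneg a2 hW.le
      · intro j hj
        rw [hs, hs]
        exact mul_le_mul_of_nonneg_right (a3 j (lt_of_mul_lt_mul_right hj hW.le)) hW.le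
  · calc c * W ≤ (∑ k, (∑ i, ν i k) * ρ k) * W := mul_le_mul_of_nonneg_right h7 hW.le
      _ = _ := by
        rw [Finset.sum_mul]
        exact Finset.sum_congr rfl fun k _ => by ring

/-- a (two-price) deterministic pricing mechanism paired with a coarse
horizontal disclosure achieves at least 50.17% of the optimal welfare, and hence at
least 50.17% of the revenue of any IC-IR mechanism. -/
theorem pricing_beats_half (m : ℕ) (hm : 0 < m)
    (V : Finset (Fin m → ℝ)) (f : (Fin m → ℝ) → ℝ)
    (hV : V.Nonempty)
    (hfpos : ∀ v ∈ V, 0 < f v)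
    (hfzero : ∀ v, v ∉ V → f v = 0)
    (hsum : ∑ v ∈ V, f v = 1)
    (hnn : ∀ v ∈ V, ∀ i, 0 ≤ v i) :
    ∃ (S : Finset (Finset (Fin m))) (τ : Fin m → Finset (Fin m) → ℝ)
      (p : Fin m → ℝ) (a : Finset (Fin m) → Option (Fin m)),
      -- the signals are nonempty subsets of the set of products
      (∀ s ∈ S, s.Nonempty) ∧
      -- each τ i is a probability distribution over S
      (∀ i : Fin m, (∀ s, 0 ≤ τ i s) ∧ (∀ s, s ∉ S → τ i s = 0) ∧ (∑ s ∈ S, τ i s = 1)) ∧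
      -- i belongs to every signal in the support of τ i
      (∀ i : Fin m, ∀ s, 0 < τ i s → i ∈ s) ∧
      -- the prices are nonnegative
      (∀ i, 0 ≤ p i) ∧
      -- under the coarse horizontal disclosure σ(v) = τ(i*(v)), the selection rule a is
      -- an optimal purchase decision of the buyer at every positive-probability signal
      (∀ s ∈ S, 0 < sigR V f (fun v => τ (istar hm v)) s →
        (∀ i : Fin m, a s = some i →
          0 ≤ post V f (fun v => τ (istar hm v)) s i - p i ∧
          (∀ i' : Fin m, post V f (fun v => τ (istar hm v)) s i' - p i' ≤
            post V f (fun v => τ (istar hm v)) s i - p i)) ∧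
        (a s = none → ∀ i' : Fin m, post V f (fun v => τ (istar hm v)) s i' - p i' ≤ 0)) ∧
      -- the revenue is at least 50.17% of the optimal welfare E[max_i v_i]
      (0.5017 : ℝ) * (∑ v ∈ V, f v * vmax hm v) ≤
        (∑ s ∈ S, sigR V f (fun v => τ (istar hm v)) s * (a s).elim 0 p) ∧
      -- and hence at least 50.17% of the revenue of any IC-IR mechanism
      (∀ (κ : Type) (S' : Finset κ) (σ' : (Fin m → ℝ) → κ → ℝ)
          (x : κ → Fin m → ℝ) (q : κ → ℝ),
          IsInfo V S' σ' → IsAlloc S' x → IC V f S' σ' x q → IR V f S' σ' x q →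
          (0.5017 : ℝ) * Rev V f S' σ' q ≤
            ∑ s ∈ S, sigR V f (fun v => τ (istar hm v)) s * (a s).elim 0 p) := by
  classical
  have hq0 : ∀ i, 0 ≤ probTop V f (istar hm) i := fun i =>
    Finset.sum_nonneg fun v hv => (hfpos v (mem_filter.mp hv).1).le
  have hq1 : ∑ i, probTop V f (istar hm) i = 1 := by
    rw [← hsum]
    exact (sum_fiber V (istar hm) (fun _ v => f v)).symm
  have hC0 : ∀ l i, 0 ≤ condMean V f (istar hm) l i := fun l i =>
    div_nonneg (Finset.sum_nonneg fun v hv =>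
      mul_nonneg (hfpos v (mem_filter.mp hv).1).le (hnn v (mem_filter.mp hv).1 i)) (hq0 l)
  have hCt : ∀ l i, condMean V f (istar hm) l i ≤ condMean V f (istar hm) l l := by
    intro l i
    refine div_le_div_of_nonneg_right (Finset.sum_le_sum fun v hv => ?_) (hq0 l)
    obtain ⟨h1, h2⟩ := mem_filter.mp hv
    refine mul_le_mul_of_nonneg_left ?_ (hfpos v h1).le
    have := istar_spec hm v i
    rwa [h2] at this
  have hWel : ∑ i, probTop V f (istar hm) i * condMean V f (istar hm) i i =
      ∑ v ∈ V, f v * vmax hm v := by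
    simp_rw [vmax_eq]
    rw [sum_fiber V (istar hm) (fun i v => f v * v i)]
    exact Finset.sum_congr rfl fun i _ => prob_mul_cond V f hfpos (istar hm) i i
  have hW0 : 0 ≤ ∑ v ∈ V, f v * vmax hm v := by
    rw [← hWel]
    exact Finset.sum_nonneg fun i _ => mul_nonneg (hq0 i) (hC0 i i)
  have hA : Ach (probTop V f (istar hm)) (condMean V f (istar hm))
      (0.5017 * ∑ v ∈ V, f v * vmax hm v) := by
    rcases hW0.eq_or_lt with h0 | h0
    · rw [← h0, mul_zero]
      exact ach_full _ _ _ hq0 hq1 hC0 ⟨0, hm⟩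
        (Finset.sum_nonneg fun i _ => mul_nonneg (hq0 i) (hC0 i _))
    · refine ach_scale _ _ _ _ h0 (core _ _ hq0 hq1 (fun l i => div_nonneg (hC0 l i) hW0)
        (fun l i => div_le_div_of_nonneg_right (hCt l i) hW0) ?_)
      simp_rw [← mul_div_assoc]
      rw [← Finset.sum_div, hWel, div_self h0.ne']
  obtain ⟨S, τ, p, a, c1, c2, c3, c4, c5, c6⟩ := convert_ach hm V f hfpos _ hA
  refine ⟨S, τ, p, a, c1, c2, c3, c4, c5, c6, ?_⟩
  intro κ S' σ' x q i1 i2 _ i4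
  refine le_trans ?_ c6
  exact mul_le_mul_of_nonneg_left (rev_le hm V f hfpos hnn κ S' σ' x q i1 i2 i4) (by norm_num)

end Screening
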